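/- Equivalence of LBV and MLL+mix: (i) if the sequent ⊢ P is provable in MLL+mix, then the structure ⟨P⟩ is provable in LBV; (ii) if a structure P in normal form with P ≠ ◦ is provable in LBV, then the sequent ⊢ ⌊P⌋ is provable in MLL+mix. -/

import Mathlib

/-!
For the direction from MLL+mix to LBV, the inference rules are simulated on the par of the formulas
of a sequent: two switches give the tensor rule (`ProofLBV.tensor`), and the identity axiom follows
from atomic interactions by induction on the formula (`ProofLBV.identity`).

The other direction amounts to a cut elimination, since LBV rules act deep inside a structure. It is
obtained semantically, by Okada's phase-semantic argument. Take the commutative monoid of multisets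
of formulas, with pole the set of *cut-free provable* sequents (and the empty one), and let each
structure denote a biorthogonally closed set (`interp`). The empty sequent and the mix rule make the
two multiplicative units coincide, so equivalent structures have equal denotations (`interp_equiv`),
and the LBV rules are sound as inclusions, in any context (`interp_deriv`). Hence the denotation of
a provable structure `P` contains the empty sequent. On the other hand, for `◦`-free `P` every
sequent `Γ` in the denotation of `P` satisfies `⊢ Γ, ⌊P⌋` (`interp_subset`), by induction on `P`.
-/

/-!
The deep-inference system LBV (the `BV`-free core system of the calculus of
structures of Guglielmi).  Structures are built from the unit `◦`, atoms `a`
and negated atoms `ā` by par `[P,Q]` and copar `(P,Q)`, and are identified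
modulo the congruence generated by associativity, commutativity and the
unit laws `[P,◦]=P`, `(P,◦)=P`.  The rules `ai↓`, `s` (and the atomic cut
`ai↑`) apply inside an arbitrary one-hole context and modulo the
equivalence.
-/

namespace LBV

/-- Structures: the unit `◦`, atoms, negated atoms, par `[P,Q]` and
copar `(P,Q)`. -/
inductive St : Type where
  | unit : St
  | pos  : ℕ → St
  | neg  : ℕ → St
  | par  : St → St → St
  | cop  : St → St → St
deriving DecidableEq

/-- Negation: `¬◦ = ◦`, `¬[P,Q] = (¬P,¬Q)`, `¬(P,Q) = [¬P,¬Q]`, `¬¬P = P`. -/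
def St.negS : St → St
  | .unit => .unit
  | .pos a => .neg a
  | .neg a => .pos a
  | .par P Q => .cop P.negS Q.negS
  | .cop P Q => .par P.negS Q.negS

/-- Atoms are the propositional symbols and their negations. -/
def St.isAtom : St → Prop
  | .pos _ => True
  | .neg _ => True
  | _ => False

/-- Syntactic equivalence of structures: the smallest congruence generated
by associativity and commutativity of par and copar and the unit laws
`[P,◦]=P` and `(P,◦)=P`. -/
inductive Equiv : St → St → Prop where
  | refl (P : St) : Equiv P P
  | symm {P Q : St} : Equiv P Q → Equiv Q P
  | trans {P Q R : St} : Equiv P Q → Equiv Q R → Equiv P R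
  | parComm (P Q : St) : Equiv (.par P Q) (.par Q P)
  | copComm (P Q : St) : Equiv (.cop P Q) (.cop Q P)
  | parAssoc (P Q R : St) : Equiv (.par (.par P Q) R) (.par P (.par Q R))
  | copAssoc (P Q R : St) : Equiv (.cop (.cop P Q) R) (.cop P (.cop Q R))
  | parUnit (P : St) : Equiv (.par P .unit) P
  | copUnit (P : St) : Equiv (.cop P .unit) P
  | parCongr {P P' Q Q' : St} :
      Equiv P P' → Equiv Q Q' → Equiv (.par P Q) (.par P' Q')
  | copCongr {P P' Q Q' : St} :
      Equiv P P' → Equiv Q Q' → Equiv (.cop P Q) (.cop P' Q')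

/-- One-hole contexts. -/
inductive Ctx : Type where
  | hole : Ctx
  | parL : Ctx → St → Ctx
  | parR : St → Ctx → Ctx
  | copL : Ctx → St → Ctx
  | copR : St → Ctx → Ctx

/-- Plugging a structure into the hole of a context. -/
def Ctx.fill : Ctx → St → St
  | .hole, P => P
  | .parL C Q, P => .par (C.fill P) Q
  | .parR Q C, P => .par Q (C.fill P)
  | .copL C Q, P => .cop (C.fill P) Q
  | .copR Q C, P => .cop Q (C.fill P)

/-- Names of the rules: interaction `ai↓`, co-interaction (atomic cut)
`ai↑`, and switch `s`. -/
inductive Rule : Type where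
  | aiDown | aiUp | s
deriving DecidableEq

/-- The rules read at the root of a structure (premise on the left,
conclusion on the right). -/
inductive RootStep : Rule → St → St → Prop where
  | aiDown (A : St) (h : A.isAtom) : RootStep .aiDown .unit (.par A A.negS)
  | aiUp (A : St) (h : A.isAtom) : RootStep .aiUp (.cop A A.negS) .unit
  | s (P Q R : St) : RootStep .s (.cop P (.par Q R)) (.par (.cop P Q) R)

/-- One inference step using a rule from the set `Rs`, applied inside an
arbitrary context and modulo the equivalence. -/
def Step (Rs : Set Rule) (P Q : St) : Prop :=
  ∃ r ∈ Rs, ∃ (C : Ctx) (P' Q' : St),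
    RootStep r P' Q' ∧ Equiv P (C.fill P') ∧ Equiv (C.fill Q') Q

/-- Derivations over an arbitrary step relation: a finite sequence of rule
instances from the premise to the conclusion (modulo the equivalence). -/
inductive Deriv (Stp : St → St → Prop) : St → St → Prop where
  | eqv {P Q : St} : Equiv P Q → Deriv Stp P Q
  | step {P Q R : St} : Stp P Q → Deriv Stp Q R → Deriv Stp P R

/-- The rules of the system LBV. -/
def LBVRules : Set Rule := {.aiDown, .s}

/-- Derivations in LBV. -/
def DerivLBV (P Q : St) : Prop := Deriv (Step LBVRules) P Q

/-- A proof of `Q` in LBV is a derivation from the unit `◦` to `Q`. -/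
def ProofLBV (Q : St) : Prop := DerivLBV .unit Q

end LBV

namespace LBV

/-- Formulas of MLL+mix: atoms, negated atoms, tensor `⊗` and par `⅋`. -/
inductive MF : Type where
  | pos    : ℕ → MF
  | negA   : ℕ → MF
  | tensor : MF → MF → MF
  | parr   : MF → MF → MF
deriving DecidableEq

/-- Negation of MLL formulas, by the De Morgan laws. -/
def MF.neg : MF → MF
  | .pos a => .negA a
  | .negA a => .pos a
  | .tensor P Q => .parr P.neg Q.neg
  | .parr P Q => .tensor P.neg Q.neg

/-- Provability of one-sided sequents in MLL+mix. -/
inductive MProof : List MF → Prop where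
  | id (P : MF) : MProof [P, P.neg]
  | perm (Γ Δ : List MF) (P Q : MF) :
      MProof (Γ ++ P :: Q :: Δ) → MProof (Γ ++ Q :: P :: Δ)
  | tensor (Γ Δ : List MF) (P Q : MF) :
      MProof (Γ ++ [P]) → MProof (Q :: Δ) →
      MProof (Γ ++ Δ ++ [P.tensor Q])
  | parr (Γ : List MF) (P Q : MF) :
      MProof (Γ ++ [P, Q]) → MProof (Γ ++ [P.parr Q])
  | mix (Γ Δ : List MF) : MProof Γ → MProof Δ → MProof (Γ ++ Δ)

/-- The translation `⟨·⟩` from MLL+mix formulas to LBV structures. -/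
def MF.toSt : MF → St
  | .pos a => .pos a
  | .negA a => .neg a
  | .tensor P Q => .cop P.toSt Q.toSt
  | .parr P Q => .par P.toSt Q.toSt

/-- A structure is `◦`-free (no unit occurrences); together with `P ≠ ◦`
this captures structures in normal form. -/
def St.unitFree : St → Prop
  | .unit => False
  | .pos _ => True
  | .neg _ => True
  | .par P Q => P.unitFree ∧ Q.unitFree
  | .cop P Q => P.unitFree ∧ Q.unitFree

/-- The translation `⌊·⌋` from `◦`-free LBV structures to MLL+mix formulas
(the value on the unit is irrelevant junk). -/
def St.toMF : St → MF
  | .unit => .pos 0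
  | .pos a => .pos a
  | .neg a => .negA a
  | .par P Q => .parr P.toMF Q.toMF
  | .cop P Q => .tensor P.toMF Q.toMF

/-! ### From MLL+mix to LBV -/

lemma DerivLBV.eqv_trans {P Q R : St} (h : Equiv P Q) (d : DerivLBV Q R) : DerivLBV P R := by
  cases d with
  | eqv h' => exact .eqv (h.trans h')
  | step s d =>
    obtain ⟨r, hr, C, P', Q', hs, h1, h2⟩ := s
    exact .step ⟨r, hr, C, P', Q', hs, h.trans h1, h2⟩ d

lemma DerivLBV.trans {P Q R : St} (d : DerivLBV P Q) (e : DerivLBV Q R) : DerivLBV P R := by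
  unfold DerivLBV at d
  induction d with
  | eqv h => exact e.eqv_trans h
  | step s _ ih => exact .step s (ih e)

lemma DerivLBV.parR {P Q : St} (d : DerivLBV P Q) (R : St) :
    DerivLBV (.par P R) (.par Q R) := by
  unfold DerivLBV at d
  induction d with
  | eqv h => exact .eqv (.parCongr h (.refl _))
  | step s _ ih =>
    obtain ⟨r, hr, C, P', Q', hs, h1, h2⟩ := s
    exact .step ⟨r, hr, .parL C R, P', Q', hs, .parCongr h1 (.refl _), .parCongr h2 (.refl _)⟩ ih

lemma DerivLBV.copR {P Q : St} (d : DerivLBV P Q) (R : St) :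
    DerivLBV (.cop P R) (.cop Q R) := by
  unfold DerivLBV at d
  induction d with
  | eqv h => exact .eqv (.copCongr h (.refl _))
  | step s _ ih =>
    obtain ⟨r, hr, C, P', Q', hs, h1, h2⟩ := s
    exact .step ⟨r, hr, .copL C R, P', Q', hs, .copCongr h1 (.refl _), .copCongr h2 (.refl _)⟩ ih

lemma DerivLBV.switch (P Q R : St) :
    DerivLBV (.cop P (.par Q R)) (.par (.cop P Q) R) :=
  .step ⟨.s, by simp [LBVRules], .hole, _, _, .s P Q R, .refl _, .refl _⟩ (.eqv (.refl _))

lemma ProofLBV.interaction (A : St) (h : A.isAtom) : ProofLBV (.par A A.negS) :=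
  .step ⟨.aiDown, by simp [LBVRules], .hole, _, _, .aiDown A h, .refl _, .refl _⟩ (.eqv (.refl _))

lemma ProofLBV.eqv {P Q : St} (d : ProofLBV P) (h : Equiv P Q) : ProofLBV Q :=
  DerivLBV.trans d (.eqv h)

lemma ProofLBV.par {P Q : St} (d : ProofLBV P) (e : ProofLBV Q) : ProofLBV (.par P Q) :=
  (DerivLBV.trans e (.eqv ((Equiv.parUnit Q).symm.trans (.parComm _ _)))).trans (d.parR Q)

lemma ProofLBV.cop {P Q : St} (d : ProofLBV P) (e : ProofLBV Q) : ProofLBV (.cop P Q) :=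
  (DerivLBV.trans e (.eqv ((Equiv.copUnit Q).symm.trans (.copComm _ _)))).trans (d.copR Q)

/-- The tensor rule in LBV, obtained by two switches. -/
lemma ProofLBV.tensor {A B C D : St} (d : ProofLBV (.par A B)) (e : ProofLBV (.par C D)) :
    ProofLBV (.par (.cop A C) (.par B D)) := by
  have h1 := DerivLBV.trans (d.cop e) (.switch (.par A B) C D)
  have h2 : DerivLBV (.cop (.par A B) C) (.par (.cop A C) B) :=
    .eqv_trans (.copComm _ _)
      (DerivLBV.trans (.switch C A B) (.eqv (.parCongr (.copComm _ _) (.refl _))))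
  exact .eqv (DerivLBV.trans h1 (h2.parR D)) (.parAssoc _ _ _)

/-- The general interaction rule: `[P, ¬P]` is provable for every formula `P`. -/
lemma ProofLBV.identity (P : MF) : ProofLBV (.par P.toSt P.neg.toSt) := by
  induction P with
  | pos a => exact ProofLBV.interaction (.pos a) trivial
  | negA a => exact ProofLBV.interaction (.neg a) trivial
  | tensor P Q ihP ihQ => exact ihP.tensor ihQ
  | parr P Q ihP ihQ =>
    exact ((ihP.eqv (.parComm _ _)).tensor (ihQ.eqv (.parComm _ _))).eqv (.parComm _ _)

/-- The translation of a sequent: the par of its formulas, `◦` for the empty sequent. -/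
def seqSt : List MF → St
  | [] => .unit
  | P :: Γ => .par P.toSt (seqSt Γ)

lemma seqSt_append (Γ Δ : List MF) :
    Equiv (seqSt (Γ ++ Δ)) (.par (seqSt Γ) (seqSt Δ)) := by
  induction Γ with
  | nil => exact (Equiv.parUnit _).symm.trans (.parComm _ _)
  | cons P Γ ih => exact (Equiv.parCongr (.refl _) ih).trans (Equiv.parAssoc _ _ _).symm

lemma seqSt_snoc (Γ : List MF) (P : MF) :
    Equiv (seqSt (Γ ++ [P])) (.par P.toSt (seqSt Γ)) :=
  (seqSt_append Γ [P]).trans ((Equiv.parCongr (.refl _) (.parUnit _)).trans (.parComm _ _))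

/-- Every MLL+mix provable sequent translates to an LBV provable structure. -/
lemma MProof.proofLBV {Γ : List MF} (h : MProof Γ) : ProofLBV (seqSt Γ) := by
  induction h with
  | id P =>
    exact (ProofLBV.identity P).eqv (.parCongr (.refl _) (Equiv.parUnit _).symm)
  | perm Γ Δ P Q _ ih =>
    refine ih.eqv ((seqSt_append _ _).trans (.trans (.parCongr (.refl _) ?_)
      (seqSt_append _ _).symm))
    exact (Equiv.parAssoc _ _ _).symm.trans
      ((Equiv.parCongr (.parComm _ _) (.refl _)).trans (.parAssoc _ _ _))
  | tensor Γ Δ P Q _ _ ih1 ih2 =>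
    refine ((ih1.eqv (seqSt_snoc Γ P)).tensor ih2).eqv (.symm ((seqSt_snoc _ _).trans ?_))
    exact .parCongr (.refl _) (seqSt_append _ _)
  | parr Γ P Q _ ih =>
    refine ih.eqv ((seqSt_append _ _).trans (.trans (.parCongr (.refl _) ?_)
      (seqSt_append _ _).symm))
    exact (Equiv.parAssoc _ _ _).symm
  | mix Γ Δ _ _ ih1 ih2 => exact (ih1.par ih2).eqv (seqSt_append _ _).symm

/-! ### From LBV to MLL+mix: a phase model -/

/-- The pole of the phase model on the monoid of sequents: the MLL+mix provable sequents, together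
with the empty one, which plays the role of the unit of mix. -/
def Pole (x : Multiset MF) : Prop := ∀ Γ : List MF, (Γ : Multiset MF) = x → Γ = [] ∨ MProof Γ

lemma MProof.of_perm {Γ Δ : List MF} (h : Γ.Perm Δ) (hΓ : MProof Γ) : MProof Δ := by
  -- Generalised over a fixed prefix, since the exchange rule acts anywhere in the list.
  suffices H : ∀ Λ, MProof (Λ ++ Γ) → MProof (Λ ++ Δ) from H [] hΓ
  clear hΓ
  induction h with
  | nil => exact fun _ h => h
  | cons P _ ih => intro Λ h; simpa using ih (Λ ++ [P]) (by simpa using h)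
  | swap P Q l => exact fun Λ h => .perm Λ l Q P h
  | trans _ _ ih1 ih2 => exact fun Λ h => ih2 Λ (ih1 Λ h)

lemma pole_coe {Γ : List MF} : Pole Γ ↔ Γ = [] ∨ MProof Γ := by
  refine ⟨fun h => h Γ rfl, ?_⟩
  rintro h Δ hΔ
  have hp : Δ.Perm Γ := Multiset.coe_eq_coe.1 hΔ
  rcases h with rfl | h
  · exact .inl hp.eq_nil
  · exact .inr (h.of_perm hp.symm)

lemma pole_snoc (Γ : List MF) (P : MF) :
    Pole ((Γ : Multiset MF) + {P}) ↔ MProof (Γ ++ [P]) := by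
  have : ((Γ : Multiset MF) + {P}) = ((Γ ++ [P] : List MF) : Multiset MF) := rfl
  rw [this, pole_coe]; simp

lemma Pole.zero : Pole 0 := pole_coe (Γ := []).2 (.inl rfl)

lemma Pole.mix {x y : Multiset MF} (hx : Pole x) (hy : Pole y) : Pole (x + y) := by
  induction x using Quotient.inductionOn with | _ Γ
  induction y using Quotient.inductionOn with | _ Δ
  rcases pole_coe.1 hx with rfl | hx'
  · simpa using hy
  rcases pole_coe.1 hy with rfl | hy'
  · simpa using hx
  exact pole_coe (Γ := Γ ++ Δ).2 (.inr (.mix _ _ hx' hy'))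

lemma Pole.tensor {x y : Multiset MF} {P Q : MF} (hx : Pole (x + {P})) (hy : Pole (y + {Q})) :
    Pole (x + y + {P.tensor Q}) := by
  induction x using Quotient.inductionOn with | _ Γ
  induction y using Quotient.inductionOn with | _ Δ
  have hy' := ((pole_snoc Δ Q).1 hy).of_perm (List.perm_append_singleton Q Δ)
  exact (pole_snoc (Γ ++ Δ) _).2 (.tensor _ _ _ _ ((pole_snoc Γ P).1 hx) hy')

lemma Pole.parr {x : Multiset MF} {P Q : MF} (h : Pole (x + {P} + {Q})) :
    Pole (x + {P.parr Q}) := by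
  induction x using Quotient.inductionOn with | _ Γ
  have h' := (pole_snoc (Γ ++ [P]) Q).1 h
  exact (pole_snoc Γ _).2 (.parr _ _ _ (by simpa using h'))

/-- The orthogonal `X^⊥` of a set of sequents. -/
def orth (X : Set (Multiset MF)) : Set (Multiset MF) := {x | ∀ y ∈ X, Pole (x + y)}

open scoped Pointwise

/-- The interpretation of structures as facts (biorthogonally closed sets): `a` denotes
`{a}^⊥`, `ā` its orthogonal, `◦` the pole, and copar and par are the tensor
`(X + Y)^⊥⊥` and its dual `(X^⊥ + Y^⊥)^⊥` of phase semantics. -/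
def interp : St → Set (Multiset MF)
  | .unit => orth {0}
  | .pos a => orth {{.pos a}}
  | .neg a => orth (orth {{.pos a}})
  | .par P Q => orth (orth (interp P) + orth (interp Q))
  | .cop P Q => orth (orth (interp P + interp Q))

lemma orth_anti {X Y : Set (Multiset MF)} (h : X ⊆ Y) : orth Y ⊆ orth X :=
  fun _ hx y hy => hx y (h hy)

lemma subset_orth_orth (X : Set (Multiset MF)) : X ⊆ orth (orth X) :=
  fun x hx y hy => by rw [add_comm]; exact hy x hx

lemma orth_orth_orth (X : Set (Multiset MF)) : orth (orth (orth X)) = orth X :=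
  (orth_anti (subset_orth_orth X)).antisymm (subset_orth_orth _)

lemma mem_orth_add {X Y : Set (Multiset MF)} {x : Multiset MF} :
    x ∈ orth (X + Y) ↔ ∀ y ∈ Y, x + y ∈ orth X := by
  constructor
  · intro h y hy z hz
    rw [add_assoc, add_comm y]
    exact h _ (Set.add_mem_add hz hy)
  · rintro h _ ⟨z, hz, y, hy, rfl⟩
    have := h y hy z hz
    rwa [add_assoc, add_comm y] at this

/-- Biorthogonal closure of a summand is invisible to the orthogonal; hence the associativity
laws. -/
lemma orth_closure_add (X Y : Set (Multiset MF)) : orth (orth (orth X) + Y) = orth (X + Y) := by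
  ext x
  simp only [mem_orth_add, orth_orth_orth]

lemma orth_add_closure (X Y : Set (Multiset MF)) : orth (X + orth (orth Y)) = orth (X + Y) := by
  rw [add_comm, orth_closure_add, add_comm]

/-- In the presence of mix and the empty sequent the two multiplicative units coincide. -/
lemma orth_orth_zero : orth (orth {0}) = orth {0} := by
  have hz : ∀ x, x ∈ orth {0} ↔ Pole x := fun x => by simp [orth]
  ext x
  rw [hz]
  constructor
  · intro h
    simpa using h 0 ((hz 0).2 .zero)
  · exact fun h y hy => h.mix ((hz y).1 hy)

lemma interp_closed (P : St) : orth (orth (interp P)) = interp P := by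
  cases P <;> exact orth_orth_orth _

lemma interp_equiv {P Q : St} (h : Equiv P Q) : interp P = interp Q := by
  induction h with
  | refl => rfl
  | symm _ ih => exact ih.symm
  | trans _ _ ih1 ih2 => exact ih1.trans ih2
  | parComm P Q => simp only [interp, add_comm]
  | copComm P Q => simp only [interp, add_comm]
  | parAssoc P Q R => simp only [interp, orth_closure_add, orth_add_closure, add_assoc]
  | copAssoc P Q R => simp only [interp, orth_closure_add, orth_add_closure, add_assoc]
  | parUnit P =>
    have h0 : ({0} : Set (Multiset MF)) = 0 := rfl
    simp only [interp, orth_add_closure]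
    rw [h0, add_zero, interp_closed]
  | copUnit P =>
    have h0 : ({0} : Set (Multiset MF)) = 0 := rfl
    simp only [interp]
    rw [← orth_orth_zero, orth_add_closure, h0, add_zero, interp_closed]
  | parCongr _ _ ih1 ih2 => simp only [interp, ih1, ih2]
  | copCongr _ _ ih1 ih2 => simp only [interp, ih1, ih2]

lemma interp_fill {P Q : St} (h : interp P ⊆ interp Q) (C : Ctx) :
    interp (C.fill P) ⊆ interp (C.fill Q) := by
  induction C with
  | hole => exact h
  | parL C R ih => exact orth_anti (Set.add_subset_add_right (orth_anti ih))
  | parR R C ih => exact orth_anti (Set.add_subset_add_left (orth_anti ih))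
  | copL C R ih => exact orth_anti (orth_anti (Set.add_subset_add_right ih))
  | copR R C ih => exact orth_anti (orth_anti (Set.add_subset_add_left ih))

lemma interp_interaction (A : St) (h : A.isAtom) : interp .unit ⊆ interp (.par A A.negS) := by
  -- In both cases `¬A` denotes the orthogonal of `A`.
  have hneg : interp A.negS = orth (interp A) := by
    cases A with
    | pos a => rfl
    | neg a => exact (orth_orth_orth _).symm
    | _ => exact h.elim
  intro x hx
  have hx : Pole x := by simpa using hx 0 rfl
  simp only [interp, hneg]
  rintro _ ⟨y, hy, z, hz, rfl⟩
  refine hx.mix ?_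
  change Pole (y + z)
  rw [add_comm]
  exact hz y hy

lemma interp_switch (P Q R : St) :
    interp (.cop P (.par Q R)) ⊆ interp (.par (.cop P Q) R) := by
  simp only [interp, orth_closure_add]
  -- The target is closed, so it is enough to include the generators of the source.
  rw [← orth_orth_orth (orth (interp P + interp Q) + orth (interp R))]
  refine orth_anti (orth_anti ?_)
  rintro _ ⟨p, hp, y, hy, rfl⟩ _ ⟨u, hu, r, hr, rfl⟩
  have hup : u + p ∈ orth (interp Q) := by
    rw [add_comm (interp P)] at hu
    exact mem_orth_add.1 hu p hp
  have := hy _ (Set.add_mem_add hup hr)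
  change Pole (p + y + (u + r))
  rwa [show p + y + (u + r) = y + (u + p + r) by abel]

lemma interp_deriv {P Q : St} (d : DerivLBV P Q) : interp P ⊆ interp Q := by
  unfold DerivLBV at d
  induction d with
  | eqv h => exact (interp_equiv h).subset
  | step s _ ih =>
    refine subset_trans ?_ ih
    obtain ⟨r, hr, C, P', Q', hs, h1, h2⟩ := s
    rw [interp_equiv h1, ← interp_equiv h2]
    refine interp_fill ?_ C
    cases hs with
    | aiDown A h => exact interp_interaction A h
    | aiUp A h => simp [LBVRules] at hr
    | s P Q R => exact interp_switch P Q R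

/-- Okada's lemma: every sequent in the denotation of a `◦`-free structure `P` proves `⌊P⌋`.
Applied to the empty sequent, it turns validity in the phase model into provability. -/
lemma interp_subset (P : St) (h : P.unitFree) : interp P ⊆ orth {{P.toMF}} := by
  induction P with
  | unit => exact h.elim
  | pos a => exact subset_rfl
  | neg a =>
    refine orth_anti ?_
    rintro _ rfl _ rfl
    exact pole_coe (Γ := [.negA a, .pos a]).2 (.inr (.id (.negA a)))
  | par P Q ihP ihQ =>
    rintro x hx _ rfl
    have self_mem {P : St} (h : interp P ⊆ orth {{P.toMF}}) : {P.toMF} ∈ orth (interp P) :=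
      orth_anti h (subset_orth_orth _ rfl)
    have := hx _ (Set.add_mem_add (self_mem (ihP h.1)) (self_mem (ihQ h.2)))
    rw [← add_assoc] at this
    exact this.parr
  | cop P Q ihP ihQ =>
    rw [← orth_orth_orth {{(St.cop P Q).toMF}}]
    refine orth_anti (orth_anti ?_)
    rintro _ ⟨x, hx, y, hy, rfl⟩ _ rfl
    exact Pole.tensor (ihP h.1 hx _ rfl) (ihQ h.2 hy _ rfl)

/-- Equivalence of LBV and MLL+mix.
(i) If the sequent `⊢ P` is provable in MLL+mix, then the structure `⟨P⟩` is
provable in LBV.  (ii) If a structure `P` in normal form with `P ≠ ◦` is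
provable in LBV, then the sequent `⊢ ⌊P⌋` is provable in MLL+mix. -/
theorem lbv_mll_equiv :
    (∀ P : MF, MProof [P] → ProofLBV P.toSt) ∧
    (∀ P : St, P.unitFree → ProofLBV P → MProof [P.toMF]) := by
  refine ⟨fun P h => h.proofLBV.eqv (.parUnit _), fun P hP d => ?_⟩
  have h0 : (0 : Multiset MF) ∈ interp P := by
    refine interp_deriv d ?_
    rintro _ rfl
    exact Pole.zero
  exact (pole_snoc [] _).1 (interp_subset P hP h0 _ rfl)

end LBV
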